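/- Let ψ : ℝ → ℝ be twice differentiable with ψ''(x) = Q(x)ψ(x) for all x ∈ ℝ, where Q(x) := (p + Bx + A(x))² − ε. Assume that the function x ↦ (p + Bx + A(x))ψ(x)² is Lebesgue integrable on ℝ and that ψ'(x)² − Q(x)ψ(x)² → 0 as x → +∞ and as x → −∞. Then ∫_ℝ (p + Bx + A(x))ψ(x)² dx = −(1/B)·∫_{−a}^{a} b(x)(p + Bx + A(x))ψ(x)² dx. -/

import Mathlib

open MeasureTheory Filter

/-!
For a solution of `ψ'' = Q ψ` the quantity `‖ψ'‖² - Q ‖ψ‖²` has derivative `-Q' ‖ψ‖²`, because the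
terms containing `⟪ψ, ψ'⟫` cancel. If it has the same limit at both ends of the line, then
`∫ Q' ‖ψ‖² = 0`. For `Q = W² - ε` with `W' = B + b` this reads `2 ∫ (B + b) W ‖ψ‖² = 0`, which is
solved for `∫ W ‖ψ‖²`.
-/

section Schrodinger

variable {H : Type*} [NormedAddCommGroup H] [InnerProductSpace ℝ H] {ψ ψ' : ℝ → H}

theorem hasDerivAt_norm_sq_sub_mul_norm_sq {Q : ℝ → ℝ} {q x : ℝ}
    (hψ : HasDerivAt ψ (ψ' x) x) (hψ' : HasDerivAt ψ' (Q x • ψ x) x) (hQ : HasDerivAt Q q x) :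
    HasDerivAt (fun y ↦ ‖ψ' y‖ ^ 2 - Q y * ‖ψ y‖ ^ 2) (-(q * ‖ψ x‖ ^ 2)) x := by
  refine (hψ'.norm_sq.sub (hQ.mul hψ.norm_sq)).congr_deriv ?_
  rw [real_inner_smul_right, real_inner_comm (ψ x) (ψ' x)]
  ring

theorem integral_deriv_mul_norm_sq_eq_sub {Q Q' : ℝ → ℝ} {m n : ℝ}
    (hψ : ∀ x, HasDerivAt ψ (ψ' x) x) (hψ' : ∀ x, HasDerivAt ψ' (Q x • ψ x) x)
    (hQ : ∀ x, HasDerivAt Q (Q' x) x) (hint : Integrable fun x ↦ Q' x * ‖ψ x‖ ^ 2)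
    (hbot : Tendsto (fun x ↦ ‖ψ' x‖ ^ 2 - Q x * ‖ψ x‖ ^ 2) atBot (nhds m))
    (htop : Tendsto (fun x ↦ ‖ψ' x‖ ^ 2 - Q x * ‖ψ x‖ ^ 2) atTop (nhds n)) :
    ∫ x, Q' x * ‖ψ x‖ ^ 2 = m - n := by
  have h := integral_of_hasDerivAt_of_tendsto
    (fun x ↦ hasDerivAt_norm_sq_sub_mul_norm_sq (hψ x) (hψ' x) (hQ x)) hint.neg hbot htop
  rw [integral_neg] at h
  linarith

theorem stmt_7_general {B ε l : ℝ} (hB : B ≠ 0) {b W Q : ℝ → ℝ}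
    (hb : ∃ M, ∀ x, |b x| ≤ M) (hW : ∀ x, HasDerivAt W (B + b x) x) (hQ : ∀ x, Q x = W x ^ 2 - ε)
    (hψ : ∀ x, HasDerivAt ψ (ψ' x) x) (hψ' : ∀ x, HasDerivAt ψ' (Q x • ψ x) x)
    (hint : Integrable fun x ↦ W x * ‖ψ x‖ ^ 2)
    (htop : Tendsto (fun x ↦ ‖ψ' x‖ ^ 2 - Q x * ‖ψ x‖ ^ 2) atTop (nhds l))
    (hbot : Tendsto (fun x ↦ ‖ψ' x‖ ^ 2 - Q x * ‖ψ x‖ ^ 2) atBot (nhds l)) :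
    ∫ x, W x * ‖ψ x‖ ^ 2 = -(1 / B) * ∫ x, b x * W x * ‖ψ x‖ ^ 2 := by
  obtain ⟨M, hM⟩ := hb
  have hb_meas : Measurable b := by
    have hb_eq : b = fun x ↦ deriv W x - B := funext fun x ↦ by rw [(hW x).deriv]; ring
    exact hb_eq ▸ (measurable_deriv W).sub_const B
  have hintb : Integrable fun x ↦ b x * W x * ‖ψ x‖ ^ 2 := by
    simpa only [mul_assoc] using hint.bdd_mul hb_meas.aestronglyMeasurable (.of_forall hM)
  have hQ' (x : ℝ) : HasDerivAt Q (2 * W x * (B + b x)) x := by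
    simpa [funext hQ] using ((hW x).fun_pow 2).sub_const ε
  have hexpand (x : ℝ) : 2 * W x * (B + b x) * ‖ψ x‖ ^ 2 =
      2 * (B * (W x * ‖ψ x‖ ^ 2) + b x * W x * ‖ψ x‖ ^ 2) := by ring
  have hvirial : ∫ x, 2 * W x * (B + b x) * ‖ψ x‖ ^ 2 = l - l := by
    refine integral_deriv_mul_norm_sq_eq_sub hψ hψ' hQ' ?_ hbot htop
    simpa only [hexpand] using ((hint.const_mul B).fun_add hintb).const_mul 2
  have hbalance : B * (∫ x, W x * ‖ψ x‖ ^ 2) + ∫ x, b x * W x * ‖ψ x‖ ^ 2 = 0 := by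
    simp only [hexpand, integral_const_mul, integral_add (hint.const_mul B) hintb] at hvirial
    linarith
  field_simp
  linarith

end Schrodinger

theorem hasDerivAt_const_add_mul_add_integral {b A : ℝ → ℝ} (hb : Continuous b)
    (hA : ∀ x, A x = ∫ t in (0 : ℝ)..x, b t) (p B x : ℝ) :
    HasDerivAt (fun y ↦ p + B * y + A y) (B + b x) x := by
  simp only [hA]
  simpa using (((hasDerivAt_id x).const_mul B).const_add p).fun_add
    (hb.integral_hasStrictDerivAt 0 x).hasDerivAt

theorem intervalIntegral_eq_integral_of_support_subset_Icc {E : Type*} [NormedAddCommGroup E]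
    [NormedSpace ℝ E] {μ : Measure ℝ} [NullSingletonClass μ] {f : ℝ → E} {a c : ℝ} (hac : a ≤ c)
    (hf : Function.support f ⊆ Set.Icc a c) : ∫ x in a..c, f x ∂μ = ∫ x, f x ∂μ := by
  rw [intervalIntegral.integral_of_le hac, ← integral_Icc_eq_integral_Ioc,
    setIntegral_eq_integral_of_forall_compl_eq_zero]
  exact fun x hx ↦ Function.notMem_support.mp fun h ↦ hx (hf h)

/-- Feynman–Hellmann identity: for a solution ψ of ψ'' = Q ψ with
Q(x) = (p + Bx + A(x))² − ε and A(x) = ∫₀ˣ b, if (p + Bx + A(x))ψ(x)² is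
integrable and ψ'² − Qψ² → 0 at ±∞, then
∫ℝ (p + Bx + A(x))ψ(x)² dx = −(1/B)·∫₋ₐᵃ b(x)(p + Bx + A(x))ψ(x)² dx. -/
theorem stmt_7 (B a : ℝ) (hB : 0 < B) (ha : 0 < a)
    (b : ℝ → ℝ) (hb_cont : Continuous b) (hb_bd : ∃ M : ℝ, ∀ x : ℝ, |b x| ≤ M)
    (hb_supp : Function.support b ⊆ Set.Icc (-a) a)
    (A : ℝ → ℝ) (hA : ∀ x : ℝ, A x = ∫ t in (0 : ℝ)..x, b t)
    (p ε : ℝ) (Q : ℝ → ℝ) (hQ : ∀ x : ℝ, Q x = (p + B * x + A x) ^ 2 - ε)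
    (ψ : ℝ → ℝ) (hψ : Differentiable ℝ ψ) (hψ' : Differentiable ℝ (deriv ψ))
    (hode : ∀ x : ℝ, deriv (deriv ψ) x = Q x * ψ x)
    (hint : Integrable (fun x : ℝ => (p + B * x + A x) * ψ x ^ 2) volume)
    (htop : Tendsto (fun x : ℝ => (deriv ψ x) ^ 2 - Q x * ψ x ^ 2) atTop (nhds 0))
    (hbot : Tendsto (fun x : ℝ => (deriv ψ x) ^ 2 - Q x * ψ x ^ 2) atBot (nhds 0)) :
    ∫ x : ℝ, (p + B * x + A x) * ψ x ^ 2 =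
      -(1 / B) * ∫ x in (-a)..a, b x * (p + B * x + A x) * ψ x ^ 2 := by
  rw [intervalIntegral_eq_integral_of_support_subset_Icc (by linarith) fun x hx ↦
    hb_supp (left_ne_zero_of_mul (left_ne_zero_of_mul hx))]
  simpa using stmt_7_general hB.ne' hb_bd (hasDerivAt_const_add_mul_add_integral hb_cont hA p B) hQ
    (fun x ↦ (hψ x).hasDerivAt) (fun x ↦ (hψ' x).hasDerivAt.congr_deriv (hode x))
    (by simpa using hint) (by simpa using htop) (by simpa using hbot)
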